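/- Let D be a dual equivalence class and S a slide (jeu de taquin) equivalence class of skew standard tableaux, such that the rectification shape of D equals the shape of the rectification tableau of S. Then there is a unique tableau lying in both D and S. -/

import Mathlib

/-- `β` is obtained from `α` by adding a single box. -/
def OneBox (α β : YoungDiagram) : Prop := α ≤ β ∧ β.cells.card = α.cells.card + 1

/-- A chain of partitions of length `m`, each step adding one box
(the chain encoding of a skew standard Young tableau). -/
def IsChain' (m : ℕ) (S : ℕ → YoungDiagram) : Prop := ∀ i, i < m → OneBox (S i) (S (i + 1))

/-- Two cells are adjacent if they share an edge. -/
def AdjCell (c d : ℕ × ℕ) : Prop :=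
  (c.1 = d.1 ∧ (c.2 + 1 = d.2 ∨ d.2 + 1 = c.2)) ∨
  (c.2 = d.2 ∧ (c.1 + 1 = d.1 ∨ d.1 + 1 = c.1))

/-- The local recurrence condition of growth diagrams for a square with corners
`γ ⊆ α, δ ⊆ β`: if the two boxes of `β/γ` are nonadjacent then `α` and `δ` are the
two distinct intermediate partitions between `γ` and `β`. -/
def GrowthSq (γ α δ β : YoungDiagram) : Prop :=
  (∃ c ∈ β.cells, ∃ d ∈ β.cells, c ∉ γ.cells ∧ d ∉ γ.cells ∧ c ≠ d ∧ ¬ AdjCell c d) → α ≠ δ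

/-- A growth diagram on the rectangle `[0,t] × [0,s]`. -/
def IsGrowth (t s : ℕ) (L : ℕ → ℕ → YoungDiagram) : Prop :=
  (∀ i j, i < t → j ≤ s → OneBox (L i j) (L (i + 1) j)) ∧
  (∀ i j, i ≤ t → j < s → OneBox (L i j) (L i (j + 1))) ∧
  (∀ i j, i < t → j < s → GrowthSq (L i j) (L i (j + 1)) (L (i + 1) j) (L (i + 1) (j + 1)))

/-- `(S, T)` shuffles to `(T', S')`: there is a growth diagram on `[0,t] × [0,s]` whose
left edge is the chain `S` (length `s`), top edge is `T` (length `t`), bottom edge is `T'`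
and right edge is `S'`.  This encodes the jeu de taquin shuffle of a pair of skew
standard tableaux. -/
def ShufflesTo (s t : ℕ) (S T T' S' : ℕ → YoungDiagram) : Prop :=
  ∃ L, IsGrowth t s L ∧ (∀ j, j ≤ s → L 0 j = S j) ∧ (∀ i, i ≤ t → L i s = T i) ∧
    (∀ i, i ≤ t → L i 0 = T' i) ∧ (∀ j, j ≤ s → L t j = S' j)

/-- `R` is the rectification of the chain (skew tableau) `T`: shuffling some straight-shape
chain `A` with `T` produces the straight-shape chain `R`. -/
def Rectifies (m : ℕ) (T R : ℕ → YoungDiagram) : Prop :=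
  R 0 = ⊥ ∧ ∃ s A A', A 0 = ⊥ ∧ ShufflesTo s m A T R A'

/-- Dual equivalence of two chains (skew standard tableaux) of length `m`: they have the same
shape, and shuffling any other tableau through them gives identical results. -/
def DualEquiv (m : ℕ) (S S' : ℕ → YoungDiagram) : Prop :=
  S 0 = S' 0 ∧ S m = S' m ∧
  (∀ t T A B A' B', ShufflesTo m t S T A B → ShufflesTo m t S' T A' B' →
    ∀ i, i ≤ t → A i = A' i) ∧
  (∀ t T A B A' B', ShufflesTo t m T S A B → ShufflesTo t m T S' A' B' →
    ∀ i, i ≤ t → B i = B' i)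

/-- Slide (jeu de taquin) equivalence: two chains with a common rectification. -/
def SlideEquiv (m : ℕ) (T T' : ℕ → YoungDiagram) : Prop :=
  ∃ R, Rectifies m T R ∧ Rectifies m T' R

/-- `β` is obtained from `α` by adding a box of content `c`. -/
def AddContent (α : YoungDiagram) (c : ℤ) (β : YoungDiagram) : Prop :=
  ∃ i j : ℕ, (j : ℤ) - i = c ∧ (i, j) ∉ α ∧ ∀ x y, (x, y) ∈ β ↔ (x, y) ∈ α ∨ (x = i ∧ y = j)

/-- The effect of a growth square on contents: left edge `a`, top edge `b`, bottom edge `b'`,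
right edge `a'`. -/
def ContentSq (a b b' a' : ℤ) : Prop :=
  ((a = b + 1 ∨ b = a + 1) ∧ b' = a ∧ a' = b) ∨ ((a + 2 ≤ b ∨ b + 2 ≤ a) ∧ b' = b ∧ a' = a)

theorem YoungDiagram.mem_of_le {γ : YoungDiagram} {i j i' j' : ℕ} (h : (i', j') ∈ γ)
    (hi : i ≤ i') (hj : j ≤ j') : (i, j) ∈ γ :=
  γ.isLowerSet (show ((i, j) : ℕ × ℕ) ≤ (i', j') from ⟨hi, hj⟩) h

theorem YoungDiagram.ext_mem {α β : YoungDiagram} (h : ∀ x y, (x, y) ∈ α ↔ (x, y) ∈ β) :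
    α = β := by
  ext ⟨x, y⟩
  exact h x y

theorem AddContent.oneBox {α β : YoungDiagram} {c : ℤ} (h : AddContent α c β) : OneBox α β := by
  obtain ⟨i, j, -, hn, hb⟩ := h
  refine ⟨fun p hp => (hb p.1 p.2).2 (Or.inl hp), ?_⟩
  have : β.cells = insert (i, j) α.cells := by
    ext ⟨x, y⟩
    rw [Finset.mem_insert, YoungDiagram.mem_cells, YoungDiagram.mem_cells, hb, Prod.mk.injEq]
    tauto
  rw [this, Finset.card_insert_of_notMem hn]

theorem OneBox.exists_addContent {α β : YoungDiagram} (h : OneBox α β) :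
    ∃ c, AddContent α c β := by
  obtain ⟨hle, hc⟩ := h
  have h1 : (β.cells \ α.cells).card = 1 := by
    rw [Finset.card_sdiff_of_subset (by exact hle)]
    omega
  obtain ⟨⟨i, j⟩, hij⟩ := Finset.card_eq_one.1 h1
  have key : ∀ x y, ((x, y) ∈ β ∧ (x, y) ∉ α) ↔ (x = i ∧ y = j) := by
    intro x y
    have := Finset.ext_iff.1 hij (x, y)
    simpa using this
  refine ⟨j - i, i, j, rfl, ((key i j).2 ⟨rfl, rfl⟩).2, fun x y => ?_⟩
  have h2 : (x, y) ∈ α → (x, y) ∈ β := fun h => hle h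
  have := key x y
  tauto

theorem AddContent.target_unique {α β β' : YoungDiagram} {c : ℤ} (h : AddContent α c β)
    (h' : AddContent α c β') : β = β' := by
  obtain ⟨i, j, hc, hn, hb⟩ := h
  obtain ⟨i', j', hc', hn', hb'⟩ := h'
  have h1 : (i, j) ∈ β := (hb i j).2 (Or.inr ⟨rfl, rfl⟩)
  have h2 : (i', j') ∈ β' := (hb' i' j').2 (Or.inr ⟨rfl, rfl⟩)
  have hi : i = i' := by
    rcases lt_trichotomy i i' with h | h | h
    · have := ((hb' i j).1 (YoungDiagram.mem_of_le h2 (by omega) (by omega))).resolve_left hn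
      omega
    · exact h
    · have := ((hb i' j').1 (YoungDiagram.mem_of_le h1 (by omega) (by omega))).resolve_left hn'
      omega
  have hj : j = j' := by omega
  subst hi hj
  exact YoungDiagram.ext_mem fun x y => (hb x y).trans (hb' x y).symm

theorem AddContent.source_unique {α α' β : YoungDiagram} {c : ℤ} (h : AddContent α c β)
    (h' : AddContent α' c β) : α = α' := by
  obtain ⟨i, j, hc, hn, hb⟩ := h
  obtain ⟨i', j', hc', hn', hb'⟩ := h'
  have h1 : (i, j) ∈ β := (hb i j).2 (Or.inr ⟨rfl, rfl⟩)
  have h2 : (i', j') ∈ β := (hb' i' j').2 (Or.inr ⟨rfl, rfl⟩)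
  have hi : i = i' := by
    rcases lt_trichotomy i i' with h | h | h
    · rcases (hb i' j').1 h2 with h3 | h3
      · exact absurd (YoungDiagram.mem_of_le h3 (by omega) (by omega)) hn
      · omega
    · exact h
    · rcases (hb' i j).1 h1 with h3 | h3
      · exact absurd (YoungDiagram.mem_of_le h3 (by omega) (by omega)) hn'
      · omega
  have hj : j = j' := by omega
  subst hi hj
  refine YoungDiagram.ext_mem fun x y => ?_
  have e1 := hb x y
  have e2 := hb' x y
  by_cases hxy : x = i ∧ y = j
  · obtain ⟨rfl, rfl⟩ := hxy
    exact iff_of_false hn hn'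
  · tauto

theorem AddContent.ne {α β γ : YoungDiagram} {a b : ℤ} (h : AddContent α a β)
    (h' : AddContent β b γ) : a ≠ b := by
  rintro rfl
  obtain ⟨i, j, hc, hn, hb⟩ := h
  obtain ⟨i', j', hc', hn', hb'⟩ := h'
  have h1 : (i, j) ∈ β := (hb i j).2 (Or.inr ⟨rfl, rfl⟩)
  have h2 : (i', j') ∈ γ := (hb' i' j').2 (Or.inr ⟨rfl, rfl⟩)
  by_cases h : i' ≤ i
  · exact hn' (YoungDiagram.mem_of_le h1 h (by omega))
  · have h3 := (hb' i (j + 1)).1 (YoungDiagram.mem_of_le h2 (by omega) (by omega))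
    rw [hb] at h3
    rcases h3 with (h3 | h3) | h3
    · exact hn (YoungDiagram.mem_of_le h3 le_rfl (by omega))
    · omega
    · omega

theorem AddContent.ne_of_three {α β γ δ : YoungDiagram} {a b c : ℤ} (h : AddContent α a β)
    (h' : AddContent β b γ) (h'' : AddContent γ c δ) : a ≠ c := by
  rintro rfl
  obtain ⟨i, j, hc, hn, hb⟩ := h
  obtain ⟨i', j', hc', hn', hb'⟩ := h'
  obtain ⟨k, l, hc'', hn'', hb''⟩ := h''
  have h1 : (i, j) ∈ γ := (hb' i j).2 (Or.inl ((hb i j).2 (Or.inr ⟨rfl, rfl⟩)))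
  have h2 : (k, l) ∈ δ := (hb'' k l).2 (Or.inr ⟨rfl, rfl⟩)
  by_cases h : k ≤ i
  · exact hn'' (YoungDiagram.mem_of_le h1 h (by omega))
  · have h3 := (hb'' i (j + 1)).1 (YoungDiagram.mem_of_le h2 (by omega) (by omega))
    have h4 := (hb'' (i + 1) j).1 (YoungDiagram.mem_of_le h2 (by omega) (by omega))
    rw [hb', hb] at h3 h4
    rcases h3 with ((h3 | h3) | h3) | h3
    · exact hn (YoungDiagram.mem_of_le h3 le_rfl (by omega))
    · omega
    · rcases h4 with ((h4 | h4) | h4) | h4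
      · exact hn (YoungDiagram.mem_of_le h4 (by omega) le_rfl)
      all_goals omega
    · omega

/-- Two consecutive boxes whose contents differ by more than one can be added in either order. -/
theorem AddContent.exists_swap {γ α β : YoungDiagram} {a b : ℤ} (h : AddContent γ a α)
    (h' : AddContent α b β) (hab : a + 2 ≤ b ∨ b + 2 ≤ a) :
    ∃ δ, AddContent γ b δ ∧ AddContent δ a β := by
  obtain ⟨i, j, hc, hn, hb⟩ := h
  obtain ⟨k, l, hc', hn', hb'⟩ := h'
  have h2 : (k, l) ∈ β := (hb' k l).2 (Or.inr ⟨rfl, rfl⟩)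
  have hnle : ¬ (i ≤ k ∧ j ≤ l) := by
    rintro ⟨hik, hjl⟩
    have : (i + 1 ≤ k) ∨ (j + 1 ≤ l) := by omega
    rcases this with h | h
    · have h3 := (hb' (i + 1) j).1 (YoungDiagram.mem_of_le h2 h hjl)
      rw [hb] at h3
      rcases h3 with (h3 | h3) | h3
      · exact hn (YoungDiagram.mem_of_le h3 (by omega) le_rfl)
      all_goals omega
    · have h3 := (hb' i (j + 1)).1 (YoungDiagram.mem_of_le h2 hik h)
      rw [hb] at h3
      rcases h3 with (h3 | h3) | h3
      · exact hn (YoungDiagram.mem_of_le h3 le_rfl (by omega))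
      all_goals omega
  have hlow : IsLowerSet ((insert (k, l) γ.cells : Finset (ℕ × ℕ)) : Set (ℕ × ℕ)) := by
    rintro ⟨x, y⟩ ⟨x', y'⟩ hle hx
    obtain ⟨hle1, hle2⟩ : x' ≤ x ∧ y' ≤ y := hle
    simp only [Finset.coe_insert, Set.mem_insert_iff, Prod.mk.injEq, Finset.mem_coe,
      YoungDiagram.mem_cells] at hx ⊢
    rcases hx with ⟨rfl, rfl⟩ | hx
    · have h3 := (hb' x' y').1 (YoungDiagram.mem_of_le h2 hle1 hle2)
      rw [hb] at h3
      rcases h3 with (h3 | ⟨rfl, rfl⟩) | h3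
      · exact Or.inr h3
      · exact absurd ⟨hle1, hle2⟩ hnle
      · exact Or.inl h3
    · exact Or.inr (YoungDiagram.mem_of_le hx hle1 hle2)
  have hmem : ∀ x y, (x, y) ∈ (⟨insert (k, l) γ.cells, hlow⟩ : YoungDiagram) ↔
      (x, y) ∈ γ ∨ (x = k ∧ y = l) := by
    intro x y
    rw [← YoungDiagram.mem_cells]
    simp only [Finset.mem_insert, Prod.mk.injEq, YoungDiagram.mem_cells]
    tauto
  rw [hb] at hn'
  refine ⟨_, ⟨k, l, hc', fun h => hn' (Or.inl h), hmem⟩, i, j, hc, ?_, fun x y => ?_⟩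
  · rw [hmem]
    rintro (h | h)
    · exact hn h
    · omega
  · rw [hmem, hb', hb]
    tauto

/-- Two consecutive boxes are adjacent exactly when their contents differ by one. -/
theorem AddContent.nonadjacent_iff {γ α β : YoungDiagram} {a b : ℤ} (h : AddContent γ a α)
    (h' : AddContent α b β) :
    (∃ c ∈ β.cells, ∃ d ∈ β.cells, c ∉ γ.cells ∧ d ∉ γ.cells ∧ c ≠ d ∧ ¬ AdjCell c d) ↔
      (a + 2 ≤ b ∨ b + 2 ≤ a) := by
  have hab := h.ne h'
  obtain ⟨i, j, hc, hn, hb⟩ := h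
  obtain ⟨k, l, hc', hn', hb'⟩ := h'
  have h1 : (i, j) ∈ α := (hb i j).2 (Or.inr ⟨rfl, rfl⟩)
  have h2 : (k, l) ∈ β := (hb' k l).2 (Or.inr ⟨rfl, rfl⟩)
  constructor
  · rintro ⟨⟨x, y⟩, hx, ⟨x', y'⟩, hx', hnx, hnx', hne, hadj⟩
    rw [YoungDiagram.mem_cells, hb', hb] at hx hx'
    rw [YoungDiagram.mem_cells] at hnx hnx'
    have hne' : ¬ (x = x' ∧ y = y') := by simpa using hne
    simp only [AdjCell] at hadj
    have e1 : (x = i ∧ y = j) ∨ (x = k ∧ y = l) := by tauto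
    have e2 : (x' = i ∧ y' = j) ∨ (x' = k ∧ y' = l) := by tauto
    by_contra hcon
    have nle : ¬ (k ≤ i ∧ l ≤ j) := fun ⟨u, v⟩ => hn' (YoungDiagram.mem_of_le h1 u v)
    have n1 : ¬ (i ≤ k ∧ j + 1 ≤ l ∧ ¬ (k = i ∧ l = j + 1)) := by
      rintro ⟨u, v, w⟩
      have h3 := (hb' i (j + 1)).1 (YoungDiagram.mem_of_le h2 u v)
      rw [hb] at h3
      rcases h3 with (h3 | h3) | h3
      · exact hn (YoungDiagram.mem_of_le h3 le_rfl (by omega))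
      all_goals omega
    have n2 : ¬ (i + 1 ≤ k ∧ j ≤ l ∧ ¬ (k = i + 1 ∧ l = j)) := by
      rintro ⟨u, v, w⟩
      have h3 := (hb' (i + 1) j).1 (YoungDiagram.mem_of_le h2 u v)
      rw [hb] at h3
      rcases h3 with (h3 | h3) | h3
      · exact hn (YoungDiagram.mem_of_le h3 (by omega) le_rfl)
      all_goals omega
    omega
  · intro hfar
    refine ⟨(i, j), (hb' i j).2 (Or.inl h1), (k, l), h2, hn, fun h3 => hn' ((hb k l).2 (Or.inl h3)),
      ?_, ?_⟩
    · simp only [ne_eq, Prod.mk.injEq]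
      omega
    · simp only [AdjCell]
      omega

theorem AddContent.content_eq_or {γ α δ β : YoungDiagram} {a b c d : ℤ} (h : AddContent γ a α)
    (h' : AddContent α b β) (k : AddContent γ c δ) (k' : AddContent δ d β) :
    (c = a ∧ d = b) ∨ (c = b ∧ d = a) := by
  obtain ⟨i, j, hc, hn, hb⟩ := h
  obtain ⟨i', j', hc', hn', hb'⟩ := h'
  obtain ⟨k, l, kc, kn, kb⟩ := k
  obtain ⟨k', l', kc', kn', kb'⟩ := k'
  have key : ∀ x y, ((x, y) ∈ γ ∨ (x = i ∧ y = j)) ∨ (x = i' ∧ y = j') ↔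
      ((x, y) ∈ γ ∨ (x = k ∧ y = l)) ∨ (x = k' ∧ y = l') := by
    intro x y
    rw [← hb, ← hb', kb', kb]
  rw [hb] at hn'
  rw [kb] at kn'
  have e1 : (k = i ∧ l = j) ∨ (k = i' ∧ l = j') := by
    have := (key k l).2 (by simp)
    tauto
  have e2 : (k' = i ∧ l' = j) ∨ (k' = i' ∧ l' = j') := by
    have := (key k' l').2 (by simp)
    tauto
  push Not at kn'
  have := kn'.2
  omega

theorem AddContent.not_swap_of_adjacent {γ α δ β : YoungDiagram} {a b : ℤ}
    (h : AddContent γ a α) (h' : AddContent α b β) (k : AddContent γ b δ)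
    (k' : AddContent δ a β) : a + 2 ≤ b ∨ b + 2 ≤ a := by
  have hab := h.ne h'
  rw [← h.nonadjacent_iff h']
  obtain ⟨i, j, hc, hn, hb⟩ := h
  obtain ⟨i', j', hc', hn', hb'⟩ := h'
  obtain ⟨k, l, kc, kn, kb⟩ := k
  obtain ⟨k', l', kc', kn', kb'⟩ := k'
  have hα : (i, j) ∈ α := (hb i j).2 (Or.inr ⟨rfl, rfl⟩)
  have hδ : (k, l) ∈ δ := (kb k l).2 (Or.inr ⟨rfl, rfl⟩)
  have hβ : (i, j) ∈ β := (hb' i j).2 (Or.inl hα)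
  have hkl : (k, l) ∈ β := (kb' k l).2 (Or.inl hδ)
  have hik : k = i' ∧ l = j' := by
    have := (hb' k l).1 hkl
    rw [hb] at this
    rcases this with (h | h) | h
    · exact absurd h kn
    · omega
    · exact h
  have hijd : (i, j) ∉ δ := by
    rw [kb]
    rintro (h | h)
    · exact hn h
    · omega
  have hkla : (k, l) ∉ α := by
    rw [hik.1, hik.2]
    exact hn'
  refine ⟨(i, j), hβ, (k, l), hkl, hn, kn, ?_, ?_⟩
  · simp only [ne_eq, Prod.mk.injEq]
    omega
  · simp only [AdjCell]
    intro hadj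
    by_cases hle : i ≤ k ∧ j ≤ l
    · exact hijd (YoungDiagram.mem_of_le hδ hle.1 hle.2)
    · exact hkla (YoungDiagram.mem_of_le hα (by omega) (by omega))

theorem AddContent.contentSq {γ α δ β : YoungDiagram} {a b : ℤ} (h : AddContent γ a α)
    (h' : AddContent α b β) (k : OneBox γ δ) (k' : OneBox δ β) (hg : GrowthSq γ α δ β) :
    ∃ b' a', AddContent γ b' δ ∧ AddContent δ a' β ∧ ContentSq a b b' a' := by
  obtain ⟨c, hc⟩ := k.exists_addContent
  obtain ⟨d, hd⟩ := k'.exists_addContent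
  refine ⟨c, d, hc, hd, ?_⟩
  have hab := h.ne h'
  rcases h.content_eq_or h' hc hd with ⟨rfl, rfl⟩ | ⟨rfl, rfl⟩
  · by_cases hfar : c + 2 ≤ d ∨ d + 2 ≤ c
    · exact absurd (h.target_unique hc) (hg ((h.nonadjacent_iff h').2 hfar))
    · left; omega
  · right
    exact ⟨h.not_swap_of_adjacent h' hc hd, rfl, rfl⟩

theorem GrowthSq.symm {γ α δ β : YoungDiagram} (h : GrowthSq γ α δ β) : GrowthSq γ δ α β :=
  fun hc => (h hc).symm

theorem OneBox.exists_growthSq {γ α β : YoungDiagram} (h : OneBox γ α) (h' : OneBox α β) :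
    ∃ δ, OneBox γ δ ∧ OneBox δ β ∧ GrowthSq γ α δ β := by
  obtain ⟨a, ha⟩ := h.exists_addContent
  obtain ⟨b, hb⟩ := h'.exists_addContent
  by_cases hfar : a + 2 ≤ b ∨ b + 2 ≤ a
  · obtain ⟨δ, h1, h2⟩ := ha.exists_swap hb hfar
    refine ⟨δ, h1.oneBox, h2.oneBox, ?_⟩
    rintro - rfl
    obtain h3 | h3 := ha.content_eq_or hb h1 h2 <;>
    · have := h1.not_swap_of_adjacent h2 ha hb
      have := h1.ne hb
      omega
  · exact ⟨α, h, h', fun hc => absurd ((ha.nonadjacent_iff hb).1 hc) hfar⟩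

theorem GrowthSq.unique {γ α δ δ' β : YoungDiagram} (h : OneBox γ α) (h' : OneBox α β)
    (k : OneBox γ δ) (k' : OneBox δ β) (hg : GrowthSq γ α δ β)
    (l : OneBox γ δ') (l' : OneBox δ' β) (hg' : GrowthSq γ α δ' β) : δ = δ' := by
  obtain ⟨a, ha⟩ := h.exists_addContent
  obtain ⟨b, hb⟩ := h'.exists_addContent
  obtain ⟨c, d, hc, hd, hs⟩ := ha.contentSq hb k k' hg
  obtain ⟨c', d', hc', hd', hs'⟩ := ha.contentSq hb l l' hg'
  have : c = c' := by simp only [ContentSq] at hs hs'; omega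
  subst this
  exact hc.target_unique hc'

theorem AddContent.content_unique {α β : YoungDiagram} {a b : ℤ} (h : AddContent α a β)
    (h' : AddContent α b β) : a = b := by
  obtain ⟨i, j, hc, hn, hb⟩ := h
  obtain ⟨i', j', hc', hn', hb'⟩ := h'
  have := (hb' i j).1 ((hb i j).2 (Or.inr ⟨rfl, rfl⟩))
  have := this.resolve_left hn
  omega

/-- The Knuth relation on words of three contents, describing elementary dual equivalence. -/
def KnuthRel (x y z p q r : ℤ) : Prop :=
  (p = x ∧ q = z ∧ r = y ∧ (y < x ∧ x < z ∨ z < x ∧ x < y)) ∨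
    (p = y ∧ q = x ∧ r = z ∧ (x < z ∧ z < y ∨ y < z ∧ z < x))

set_option maxHeartbeats 1600000 in
theorem KnuthRel.slide {x y z p q r u v w t x' y' z' v' w' t' p' q' r' : ℤ}
    (hk : KnuthRel x y z p q r)
    (h1 : ContentSq z u v z') (h2 : ContentSq y v w y') (h3 : ContentSq x w t x')
    (k1 : ContentSq r u v' r') (k2 : ContentSq q v' w' q') (k3 : ContentSq p w' t' p')
    (hyu : y ≠ u) (hxv : x ≠ v) (hqu : q ≠ u) (hpv : p ≠ v')
    (hwz' : w ≠ z') (hty' : t ≠ y') (hwr : w' ≠ r') (htq : t' ≠ q') :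
    t = t' ∧ KnuthRel x' y' z' p' q' r' := by
  simp only [KnuthRel, ContentSq] at *
  rcases hk with ⟨rfl, rfl, rfl, hk⟩ | ⟨rfl, rfl, rfl, hk⟩ <;>
  rcases h1 with ⟨h1, rfl, rfl⟩ | ⟨h1, rfl, rfl⟩ <;>
  rcases k1 with ⟨k1, rfl, rfl⟩ | ⟨k1, rfl, rfl⟩ <;>
  (try (exfalso; omega)) <;>
  rcases h2 with ⟨h2, rfl, rfl⟩ | ⟨h2, rfl, rfl⟩ <;>
  rcases k2 with ⟨k2, rfl, rfl⟩ | ⟨k2, rfl, rfl⟩ <;>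
  (try (exfalso; omega)) <;>
  rcases h3 with ⟨h3, rfl, rfl⟩ | ⟨h3, rfl, rfl⟩ <;>
  rcases k3 with ⟨k3, rfl, rfl⟩ | ⟨k3, rfl, rfl⟩ <;>
  first
  | (exfalso; omega)
  | omega

theorem ContentSq.reverse {a b b' a' : ℤ} (h : ContentSq a b b' a') : ContentSq a' b' b a := by
  simp only [ContentSq] at *
  omega

theorem KnuthRel.reverse {x y z p q r : ℤ} (h : KnuthRel x y z p q r) :
    KnuthRel z y x r q p := by
  simp only [KnuthRel] at *
  omega

/-- A slide of a single box through a chain `S` of length `m`, with resulting chain `T`. -/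
structure IsSlide (m : ℕ) (S T : ℕ → YoungDiagram) : Prop where
  left : IsChain' m S
  right : IsChain' m T
  box : ∀ j, j ≤ m → OneBox (S j) (T j)
  sq : ∀ j, j < m → GrowthSq (S j) (S (j + 1)) (T j) (T (j + 1))

theorem IsChain'.mono {m n : ℕ} {S : ℕ → YoungDiagram} (h : IsChain' m S) (hn : n ≤ m) :
    IsChain' n S := fun i hi => h i (by omega)

theorem IsChain'.congr {m : ℕ} {S T : ℕ → YoungDiagram} (h : IsChain' m S)
    (hST : ∀ j, j ≤ m → S j = T j) : IsChain' m T := fun i hi => by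
  rw [← hST i (by omega), ← hST (i + 1) (by omega)]
  exact h i hi

theorem IsChain'.snoc {m : ℕ} {S : ℕ → YoungDiagram} {β : YoungDiagram} (h : IsChain' m S)
    (hβ : OneBox (S m) β) : IsChain' (m + 1) (fun j => if j ≤ m then S j else β) := fun i hi => by
  rcases Nat.lt_succ_iff_lt_or_eq.1 hi with hi | rfl
  · simpa [hi.le, Nat.succ_le_of_lt hi] using h i hi
  · simpa using hβ

theorem IsSlide.mono {m n : ℕ} {S T : ℕ → YoungDiagram} (h : IsSlide m S T) (hn : n ≤ m) :
    IsSlide n S T :=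
  ⟨h.left.mono hn, h.right.mono hn, fun j hj => h.box j (by omega), fun j hj => h.sq j (by omega)⟩

theorem IsSlide.congr {m : ℕ} {S T S' T' : ℕ → YoungDiagram} (h : IsSlide m S T)
    (hS : ∀ j, j ≤ m → S j = S' j) (hT : ∀ j, j ≤ m → T j = T' j) : IsSlide m S' T' :=
  ⟨h.left.congr hS, h.right.congr hT,
    fun j hj => by rw [← hS j hj, ← hT j hj]; exact h.box j hj,
    fun j hj => by
      rw [← hS j hj.le, ← hT j hj.le, ← hS (j + 1) hj, ← hT (j + 1) hj]; exact h.sq j hj⟩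

theorem IsSlide.right_eq_of_top {m k n : ℕ} {S T S' T' : ℕ → YoungDiagram} (h : IsSlide m S T)
    (h' : IsSlide m S' T') (hnm : n ≤ m) (hS : ∀ j, k ≤ j → j ≤ n → S j = S' j)
    (hT : T n = T' n) : ∀ j, k ≤ j → j ≤ n → T j = T' j := by
  intro j hkj hjn
  induction hjn using Nat.decreasingInduction with
  | self => exact hT
  | @of_succ j hj ih =>
    have e := ih (by omega)
    have h1 := h'.box j (by omega)
    have h2 := h'.right j (by omega)
    have h3 := h'.sq j (by omega)
    rw [← hS j hkj hj.le] at h1 h3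
    rw [← e] at h2 h3
    rw [← hS (j + 1) (by omega) hj] at h3
    exact GrowthSq.unique (h.left j (by omega)) (h.box (j + 1) (by omega)) (h.box j (by omega))
      (h.right j (by omega)) (h.sq j (by omega)) h1 h2 h3

theorem IsSlide.left_eq_of_bottom {m k n : ℕ} {S T S' T' : ℕ → YoungDiagram} (h : IsSlide m S T)
    (h' : IsSlide m S' T') (hnm : n ≤ m) (hT : ∀ j, k ≤ j → j ≤ n → T j = T' j)
    (hS : S k = S' k) : ∀ j, k ≤ j → j ≤ n → S j = S' j := by
  intro j hkj
  induction j, hkj using Nat.le_induction with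
  | base => exact fun _ => hS
  | succ j hj ih =>
    intro hjn
    have e := ih (by omega)
    have h1 := h'.left j (by omega)
    have h2 := h'.box (j + 1) (by omega)
    have h3 := h'.sq j (by omega)
    rw [← hT (j + 1) (by omega) hjn] at h2 h3
    rw [← e] at h1 h3
    rw [← hT j hj (by omega)] at h3
    exact GrowthSq.unique (h.box j (by omega)) (h.right j (by omega)) (h.left j (by omega))
      (h.box (j + 1) (by omega)) (h.sq j (by omega)).symm h1 h2 h3.symm

theorem IsChain'.exists_slide_of_top {m : ℕ} {S : ℕ → YoungDiagram} {β : YoungDiagram}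
    (hS : IsChain' m S) (hβ : OneBox (S m) β) : ∃ T, IsSlide m S T ∧ T m = β := by
  induction m generalizing β with
  | zero =>
    exact ⟨fun _ => β, ⟨hS, fun i hi => by omega, fun j hj => by
      obtain rfl : j = 0 := by omega
      exact hβ, fun j hj => by omega⟩, rfl⟩
  | succ m ih =>
    obtain ⟨δ, h1, h2, h3⟩ := (hS m (by omega)).exists_growthSq hβ
    obtain ⟨T, hT, rfl⟩ := ih (hS.mono (by omega)) h1
    refine ⟨fun j => if j ≤ m then T j else β, ⟨hS, hT.right.snoc h2, fun j hj => ?_,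
      fun j hj => ?_⟩, by simp⟩
    · rcases Nat.le_succ_iff.1 hj with hj | rfl
      · simpa [hj] using hT.box j hj
      · simpa using hβ
    · rcases Nat.lt_succ_iff_lt_or_eq.1 hj with hj | rfl
      · simpa [hj.le, Nat.succ_le_of_lt hj] using hT.sq j hj
      · simpa using h3

theorem IsChain'.exists_slide_of_bottom {m : ℕ} {T : ℕ → YoungDiagram} {α : YoungDiagram}
    (hT : IsChain' m T) (hα : OneBox α (T 0)) : ∃ S, IsSlide m S T ∧ S 0 = α := by
  induction m with
  | zero =>
    exact ⟨fun _ => α, ⟨fun i hi => by omega, hT, fun j hj => by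
      obtain rfl : j = 0 := by omega
      exact hα, fun j hj => by omega⟩, rfl⟩
  | succ m ih =>
    obtain ⟨S, hS, rfl⟩ := ih (hT.mono (by omega))
    obtain ⟨δ, h1, h2, h3⟩ := (hS.box m le_rfl).exists_growthSq (hT m (by omega))
    refine ⟨fun j => if j ≤ m then S j else δ, ⟨hS.left.snoc h1, hT, fun j hj => ?_,
      fun j hj => ?_⟩, by simp⟩
    · rcases Nat.le_succ_iff.1 hj with hj | rfl
      · simpa [hj] using hS.box j hj
      · simpa using h2
    · rcases Nat.lt_succ_iff_lt_or_eq.1 hj with hj | rfl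
      · simpa [hj.le, Nat.succ_le_of_lt hj] using hS.sq j hj
      · simpa using h3.symm

/-- The pieces of `S` and `S'` between positions `k` and `k + 3` are related by a Knuth relation
of contents. -/
def KnuthAt (k : ℕ) (S S' : ℕ → YoungDiagram) : Prop :=
  ∃ x y z p q r, AddContent (S k) x (S (k + 1)) ∧ AddContent (S (k + 1)) y (S (k + 2)) ∧
    AddContent (S (k + 2)) z (S (k + 3)) ∧ AddContent (S' k) p (S' (k + 1)) ∧
    AddContent (S' (k + 1)) q (S' (k + 2)) ∧ AddContent (S' (k + 2)) r (S' (k + 3)) ∧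
    KnuthRel x y z p q r

/-- Equality or an elementary dual equivalence of chains of length `m`. -/
def ElemStep (m : ℕ) (S S' : ℕ → YoungDiagram) : Prop :=
  IsChain' m S ∧ IsChain' m S' ∧ ((∀ j, j ≤ m → S j = S' j) ∨
    ∃ k, k + 3 ≤ m ∧ (∀ j, j ≤ m → j ≠ k + 1 → j ≠ k + 2 → S j = S' j) ∧ KnuthAt k S S')

theorem ElemStep.endpoints {m : ℕ} {S S' : ℕ → YoungDiagram} (h : ElemStep m S S') :
    S 0 = S' 0 ∧ S m = S' m := by
  obtain ⟨-, -, h | ⟨k, hk, h, -⟩⟩ := h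
  · exact ⟨h 0 (by omega), h m le_rfl⟩
  · exact ⟨h 0 (by omega) (by omega) (by omega), h m le_rfl (by omega) (by omega)⟩

/-- The contents occurring in a slide through three consecutive boxes. -/
theorem IsSlide.exists_contents {m k : ℕ} {S T : ℕ → YoungDiagram} {x y z u : ℤ}
    (h : IsSlide m S T) (hk : k + 3 ≤ m) (hx : AddContent (S k) x (S (k + 1)))
    (hy : AddContent (S (k + 1)) y (S (k + 2))) (hz : AddContent (S (k + 2)) z (S (k + 3)))
    (hu : AddContent (S (k + 3)) u (T (k + 3))) :
    ∃ v w t x' y' z', AddContent (S k) t (T k) ∧ AddContent (T k) x' (T (k + 1)) ∧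
      AddContent (T (k + 1)) y' (T (k + 2)) ∧ AddContent (T (k + 2)) z' (T (k + 3)) ∧
      ContentSq z u v z' ∧ ContentSq y v w y' ∧ ContentSq x w t x' ∧
      y ≠ u ∧ x ≠ v ∧ w ≠ z' ∧ t ≠ y' := by
  obtain ⟨v, z', hv, hz', e1⟩ := hz.contentSq hu (h.box (k + 2) (by omega))
    (h.right (k + 2) (by omega)) (h.sq (k + 2) (by omega))
  obtain ⟨w, y', hw, hy', e2⟩ := hy.contentSq hv (h.box (k + 1) (by omega))
    (h.right (k + 1) (by omega)) (h.sq (k + 1) (by omega))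
  obtain ⟨t, x', ht, hx', e3⟩ := hx.contentSq hw (h.box k (by omega))
    (h.right k (by omega)) (h.sq k (by omega))
  exact ⟨v, w, t, x', y', z', ht, hx', hy', hz', e1, e2, e3, hy.ne_of_three hz hu,
    hx.ne_of_three hy hv, hw.ne_of_three hy' hz', ht.ne_of_three hx' hy'⟩

theorem KnuthAt.slide_right {m k : ℕ} {S T S' T' : ℕ → YoungDiagram} (h : IsSlide m S T)
    (h' : IsSlide m S' T') (hk : k + 3 ≤ m) (hS : S k = S' k) (hS3 : S (k + 3) = S' (k + 3))
    (hT : T (k + 3) = T' (k + 3)) (hK : KnuthAt k S S') : T k = T' k ∧ KnuthAt k T T' := by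
  obtain ⟨x, y, z, p, q, r, hx, hy, hz, hp, hq, hr, hK⟩ := hK
  obtain ⟨u, hu⟩ := (h.box (k + 3) hk).exists_addContent
  have hu' := hu
  rw [hS3, hT] at hu'
  obtain ⟨v, w, t, x', y', z', ht, hx', hy', hz', e1, e2, e3, n1, n2, n3, n4⟩ :=
    h.exists_contents hk hx hy hz hu
  obtain ⟨v', w', t', p', q', r', ht', hp', hq', hr', e1', e2', e3', n1', n2', n3', n4'⟩ :=
    h'.exists_contents hk hp hq hr hu'
  obtain ⟨rfl, hK'⟩ := hK.slide e1 e2 e3 e1' e2' e3' n1 n2 n1' n2' n3 n4 n3' n4'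
  rw [← hS] at ht'
  exact ⟨ht.target_unique ht', x', y', z', p', q', r', hx', hy', hz', hp', hq', hr', hK'⟩

theorem KnuthAt.slide_left {m k : ℕ} {S T S' T' : ℕ → YoungDiagram} (h : IsSlide m S T)
    (h' : IsSlide m S' T') (hk : k + 3 ≤ m) (hS : S k = S' k) (hT : T k = T' k)
    (hT3 : T (k + 3) = T' (k + 3)) (hK : KnuthAt k T T') :
    S (k + 3) = S' (k + 3) ∧ KnuthAt k S S' := by
  obtain ⟨x', y', z', p', q', r', hx', hy', hz', hp', hq', hr', hK⟩ := hK
  obtain ⟨x, hx⟩ := (h.left k (by omega)).exists_addContent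
  obtain ⟨y, hy⟩ := (h.left (k + 1) (by omega)).exists_addContent
  obtain ⟨z, hz⟩ := (h.left (k + 2) (by omega)).exists_addContent
  obtain ⟨u, hu⟩ := (h.box (k + 3) hk).exists_addContent
  obtain ⟨p, hp⟩ := (h'.left k (by omega)).exists_addContent
  obtain ⟨q, hq⟩ := (h'.left (k + 1) (by omega)).exists_addContent
  obtain ⟨r, hr⟩ := (h'.left (k + 2) (by omega)).exists_addContent
  obtain ⟨u', hu'⟩ := (h'.box (k + 3) hk).exists_addContent
  obtain ⟨v, w, t, x'', y'', z'', ht, hx'', hy'', hz'', e1, e2, e3, n1, n2, n3, n4⟩ :=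
    h.exists_contents hk hx hy hz hu
  obtain ⟨v', w', t', p'', q'', r'', ht', hp'', hq'', hr'', e1', e2', e3', n1', n2', n3', n4'⟩ :=
    h'.exists_contents hk hp hq hr hu'
  obtain rfl := hx'.content_unique hx''
  obtain rfl := hy'.content_unique hy''
  obtain rfl := hz'.content_unique hz''
  obtain rfl := hp'.content_unique hp''
  obtain rfl := hq'.content_unique hq''
  obtain rfl := hr'.content_unique hr''
  rw [← hS, ← hT] at ht'
  obtain rfl := ht.content_unique ht'
  obtain ⟨rfl, hK'⟩ := hK.reverse.slide e3.reverse e2.reverse e1.reverse e3'.reverse e2'.reverse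
    e1'.reverse n4.symm n3.symm n4'.symm n3'.symm n2.symm n1.symm n2'.symm n1'.symm
  rw [← hT3] at hu'
  exact ⟨hu.source_unique hu', x, y, z, p, q, r, hx, hy, hz, hp, hq, hr, hK'.reverse⟩

theorem ElemStep.slide_right {m : ℕ} {S T S' T' : ℕ → YoungDiagram} (hE : ElemStep m S S')
    (h : IsSlide m S T) (h' : IsSlide m S' T') (hT : T m = T' m) :
    T 0 = T' 0 ∧ ElemStep m T T' := by
  suffices H : ElemStep m T T' from ⟨H.endpoints.1, H⟩
  refine ⟨h.right, h'.right, ?_⟩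
  obtain ⟨-, -, hE | ⟨k, hk, hE, hK⟩⟩ := hE
  · exact Or.inl fun j hj => h.right_eq_of_top h' le_rfl (k := 0) (fun i _ hi => hE i hi) hT j
      (by omega) hj
  · have top := h.right_eq_of_top h' le_rfl (k := k + 3)
      (fun i hi hi' => hE i hi' (by omega) (by omega)) hT
    obtain ⟨e, hK'⟩ := hK.slide_right h h' hk (hE k (by omega) (by omega) (by omega))
      (hE (k + 3) (by omega) (by omega) (by omega)) (top _ le_rfl hk)
    have bot := h.right_eq_of_top h' (n := k) (k := 0) (by omega)
      (fun i hi hi' => hE i (by omega) (by omega) (by omega)) e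
    refine Or.inr ⟨k, hk, fun j hj h1 h2 => ?_, hK'⟩
    by_cases hjk : j ≤ k
    · exact bot j (by omega) hjk
    · exact top j (by omega) hj

theorem ElemStep.slide_left {m : ℕ} {S T S' T' : ℕ → YoungDiagram} (hE : ElemStep m T T')
    (h : IsSlide m S T) (h' : IsSlide m S' T') (hS : S 0 = S' 0) :
    S m = S' m ∧ ElemStep m S S' := by
  suffices H : ElemStep m S S' from ⟨H.endpoints.2, H⟩
  refine ⟨h.left, h'.left, ?_⟩
  obtain ⟨-, -, hE | ⟨k, hk, hE, hK⟩⟩ := hE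
  · exact Or.inl fun j hj => h.left_eq_of_bottom h' le_rfl (k := 0) (fun i _ hi => hE i hi) hS j
      (by omega) hj
  · have bot := h.left_eq_of_bottom h' (n := k) (k := 0) (by omega)
      (fun i hi hi' => hE i (by omega) (by omega) (by omega)) hS
    obtain ⟨e, hK'⟩ := hK.slide_left h h' hk (bot k (by omega) le_rfl)
      (hE k (by omega) (by omega) (by omega)) (hE (k + 3) (by omega) (by omega) (by omega))
    have top := h.left_eq_of_bottom h' le_rfl (k := k + 3)
      (fun i hi hi' => hE i hi' (by omega) (by omega)) e
    refine Or.inr ⟨k, hk, fun j hj h1 h2 => ?_, hK'⟩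
    by_cases hjk : j ≤ k
    · exact bot j (by omega) hjk
    · exact top j (by omega) hj

/-- The equivalence generated by elementary dual equivalences. -/
def ElemEquiv (m : ℕ) : (ℕ → YoungDiagram) → (ℕ → YoungDiagram) → Prop :=
  Relation.ReflTransGen (ElemStep m)

theorem ElemEquiv.endpoints {m : ℕ} {S S' : ℕ → YoungDiagram} (h : ElemEquiv m S S') :
    S 0 = S' 0 ∧ S m = S' m := by
  induction h with
  | refl => exact ⟨rfl, rfl⟩
  | tail _ h ih => exact ⟨ih.1.trans h.endpoints.1, ih.2.trans h.endpoints.2⟩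

theorem ElemEquiv.trans {m : ℕ} {S S' S'' : ℕ → YoungDiagram} (h : ElemEquiv m S S')
    (h' : ElemEquiv m S' S'') : ElemEquiv m S S'' :=
  Relation.ReflTransGen.trans h h'

theorem ElemEquiv.of_eq {m : ℕ} {S S' : ℕ → YoungDiagram} (hS : IsChain' m S)
    (h : ∀ j, j ≤ m → S j = S' j) : ElemEquiv m S S' :=
  .single ⟨hS, hS.congr h, Or.inl h⟩

theorem ElemEquiv.slide_right {m : ℕ} {S T S' T' : ℕ → YoungDiagram} (hE : ElemEquiv m S S')
    (h : IsSlide m S T) (h' : IsSlide m S' T') (hT : T m = T' m) : ElemEquiv m T T' := by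
  induction hE generalizing T' with
  | refl =>
    exact .of_eq h.right fun j hj => h.right_eq_of_top h' le_rfl (k := 0) (fun _ _ _ => rfl) hT j
      (by omega) hj
  | @tail S₁ S' h0 h1 ih =>
    have hb := h.box m le_rfl
    rw [ElemEquiv.endpoints h0 |>.2] at hb
    obtain ⟨T₁, hT₁, e⟩ := h1.1.exists_slide_of_top hb
    exact .tail (ih hT₁ e.symm) (h1.slide_right hT₁ h' (e.trans hT)).2

theorem ElemEquiv.slide_left {m : ℕ} {S T S' T' : ℕ → YoungDiagram} (hE : ElemEquiv m T T')
    (h : IsSlide m S T) (h' : IsSlide m S' T') (hS : S 0 = S' 0) : ElemEquiv m S S' := by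
  induction hE generalizing S' with
  | refl =>
    exact .of_eq h.left fun j hj => h.left_eq_of_bottom h' le_rfl (k := 0) (fun _ _ _ => rfl) hS j
      (by omega) hj
  | @tail T₁ T' h0 h1 ih =>
    have hb := h.box 0 (by omega)
    rw [ElemEquiv.endpoints h0 |>.1] at hb
    obtain ⟨S₁, hS₁, e⟩ := h1.1.exists_slide_of_bottom hb
    exact .tail (ih hS₁ e.symm) (h1.slide_left hS₁ h' (e.trans hS)).2

theorem IsGrowth.isSlide {t s i : ℕ} {L : ℕ → ℕ → YoungDiagram} (h : IsGrowth t s L)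
    (hi : i < t) : IsSlide s (L i) (L (i + 1)) :=
  ⟨fun j hj => h.2.1 i j hi.le hj, fun j hj => h.2.1 (i + 1) j hi hj, fun j hj => h.1 i j hi hj,
    fun j hj => h.2.2 i j hi hj⟩

theorem IsGrowth.eq_of_left_top {t s : ℕ} {L L' : ℕ → ℕ → YoungDiagram} (h : IsGrowth t s L)
    (h' : IsGrowth t s L') (hl : ∀ j, j ≤ s → L 0 j = L' 0 j) (ht : ∀ i, i ≤ t → L i s = L' i s) :
    ∀ i, i ≤ t → ∀ j, j ≤ s → L i j = L' i j := by
  intro i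
  induction i with
  | zero => exact fun _ => hl
  | succ i ih =>
    exact fun hi j hj => (h.isSlide hi).right_eq_of_top (h'.isSlide hi) le_rfl (k := 0)
      (fun j _ hj => ih (by omega) j hj) (ht _ hi) j (by omega) hj

theorem IsGrowth.elemEquiv_right {t s : ℕ} {L L' : ℕ → ℕ → YoungDiagram} (h : IsGrowth t s L)
    (h' : IsGrowth t s L') (hl : ElemEquiv s (L 0) (L' 0)) (ht : ∀ i, i ≤ t → L i s = L' i s) :
    ∀ i, i ≤ t → ElemEquiv s (L i) (L' i) := by
  intro i
  induction i with
  | zero => exact fun _ => hl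
  | succ i ih =>
    exact fun hi => (ih (by omega)).slide_right (h.isSlide hi) (h'.isSlide hi) (ht _ hi)

theorem IsGrowth.elemEquiv_left {t s : ℕ} {L L' : ℕ → ℕ → YoungDiagram} (h : IsGrowth t s L)
    (h' : IsGrowth t s L') (hr : ElemEquiv s (L t) (L' t)) (hb : ∀ i, i ≤ t → L i 0 = L' i 0) :
    ∀ i, i ≤ t → ElemEquiv s (L i) (L' i) := by
  intro i hi
  induction hi using Nat.decreasingInduction with
  | self => exact hr
  | @of_succ i hi ih => exact ih.slide_left (h.isSlide hi) (h'.isSlide hi) (hb i hi.le)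

theorem exists_isGrowth {t s : ℕ} {S T : ℕ → YoungDiagram} (hS : IsChain' s S)
    (hT : IsChain' t T) (hST : S s = T 0) :
    ∃ L, IsGrowth t s L ∧ L 0 = S ∧ ∀ i, i ≤ t → L i s = T i := by
  induction t with
  | zero =>
    refine ⟨fun _ => S, ⟨fun _ _ hi => by omega, fun _ j _ hj => hS j hj, fun _ _ hi => by omega⟩,
      rfl, fun i hi => ?_⟩
    obtain rfl : i = 0 := by omega
    exact hST
  | succ t ih =>
    obtain ⟨L, hL, rfl, hLT⟩ := ih (hT.mono (by omega))
    have hc : IsChain' s (L t) := fun j hj => hL.2.1 t j le_rfl hj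
    obtain ⟨Q, hQ, hQT⟩ := hc.exists_slide_of_top (β := T (t + 1))
      (by rw [hLT t le_rfl]; exact hT t (by omega))
    refine ⟨fun i => if i ≤ t then L i else Q, ⟨fun i j hi hj => ?_, fun i j hi hj => ?_,
      fun i j hi hj => ?_⟩, by simp, fun i hi => ?_⟩
    · rcases Nat.lt_succ_iff_lt_or_eq.1 hi with hi | rfl
      · simpa [hi.le, Nat.succ_le_of_lt hi] using hL.1 i j hi hj
      · simpa using hQ.box j hj
    · rcases Nat.le_succ_iff.1 hi with hi | rfl
      · simpa [hi] using hL.2.1 i j hi hj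
      · simpa using hQ.right j hj
    · rcases Nat.lt_succ_iff_lt_or_eq.1 hi with hi | rfl
      · simpa [hi.le, Nat.succ_le_of_lt hi] using hL.2.2 i j hi hj
      · simpa using hQ.sq j hj
    · rcases Nat.le_succ_iff.1 hi with hi | rfl
      · simpa [hi] using hLT i hi
      · simpa using hQT

theorem exists_shufflesTo {s t : ℕ} {S T : ℕ → YoungDiagram} (hS : IsChain' s S)
    (hT : IsChain' t T) (hST : S s = T 0) : ∃ T' S', ShufflesTo s t S T T' S' := by
  obtain ⟨L, hL, rfl, h⟩ := exists_isGrowth hS hT hST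
  exact ⟨fun i => L i 0, L t, L, hL, fun _ _ => rfl, h, fun _ _ => rfl, fun _ _ => rfl⟩

namespace ShufflesTo

variable {s t : ℕ} {S T T' S' : ℕ → YoungDiagram}

theorem symm (h : ShufflesTo s t S T T' S') : ShufflesTo t s T' S' S T := by
  obtain ⟨L, hL, h1, h2, h3, h4⟩ := h
  exact ⟨fun i j => L j i, ⟨fun i j hi hj => hL.2.1 j i hj hi, fun i j hi hj => hL.1 j i hj hi,
    fun i j hi hj => (hL.2.2 j i hj hi).symm⟩, h3, h4, h1, h2⟩

theorem congr {S₁ T₁ T₁' S₁' : ℕ → YoungDiagram} (h : ShufflesTo s t S T T' S')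
    (hS : ∀ j, j ≤ s → S j = S₁ j) (hT : ∀ i, i ≤ t → T i = T₁ i)
    (hT' : ∀ i, i ≤ t → T' i = T₁' i) (hS' : ∀ j, j ≤ s → S' j = S₁' j) :
    ShufflesTo s t S₁ T₁ T₁' S₁' := by
  obtain ⟨L, hL, h1, h2, h3, h4⟩ := h
  exact ⟨L, hL, fun j hj => (h1 j hj).trans (hS j hj), fun j hj => (h2 j hj).trans (hT j hj),
    fun j hj => (h3 j hj).trans (hT' j hj), fun j hj => (h4 j hj).trans (hS' j hj)⟩

theorem isChain_left (h : ShufflesTo s t S T T' S') : IsChain' s S := by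
  obtain ⟨L, hL, h1, -, -, -⟩ := h
  exact IsChain'.congr (fun j hj => hL.2.1 0 j (by omega) hj) h1

theorem isChain_right (h : ShufflesTo s t S T T' S') : IsChain' s S' := by
  obtain ⟨L, hL, -, -, -, h4⟩ := h
  exact IsChain'.congr (fun j hj => hL.2.1 t j (by omega) hj) h4

theorem left_last (h : ShufflesTo s t S T T' S') : S s = T 0 := by
  obtain ⟨L, hL, h1, h2, -, -⟩ := h
  rw [← h1 s le_rfl, h2 0 (by omega)]

theorem left_first (h : ShufflesTo s t S T T' S') : S 0 = T' 0 := by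
  obtain ⟨L, hL, h1, -, h3, -⟩ := h
  rw [← h1 0 (by omega), h3 0 (by omega)]

theorem bottom_last (h : ShufflesTo s t S T T' S') : T' t = S' 0 := by
  obtain ⟨L, hL, -, -, h3, h4⟩ := h
  rw [← h3 t le_rfl, h4 0 (by omega)]

theorem right_unique {T₁' S₁' : ℕ → YoungDiagram} (h : ShufflesTo s t S T T' S')
    (h' : ShufflesTo s t S T T₁' S₁') : ∀ j, j ≤ s → S' j = S₁' j := by
  obtain ⟨L, hL, h1, h2, -, h4⟩ := h
  obtain ⟨L', hL', h1', h2', -, h4'⟩ := h'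
  intro j hj
  rw [← h4 j hj, ← h4' j hj]
  exact hL.eq_of_left_top hL' (fun j hj => (h1 j hj).trans (h1' j hj).symm)
    (fun i hi => (h2 i hi).trans (h2' i hi).symm) t le_rfl j hj

theorem elemEquiv_right {S₁ T₁' S₁' : ℕ → YoungDiagram} (h : ShufflesTo s t S T T' S')
    (h' : ShufflesTo s t S₁ T T₁' S₁') (hE : ElemEquiv s S S₁) :
    (∀ i, i ≤ t → T' i = T₁' i) ∧ ElemEquiv s S' S₁' := by
  have c' := h'.isChain_left
  have d := h.isChain_right
  obtain ⟨L, hL, h1, h2, h3, h4⟩ := h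
  obtain ⟨L', hL', h1', h2', h3', h4'⟩ := h'
  have key := hL.elemEquiv_right hL'
    (ElemEquiv.trans (.of_eq (fun j hj => hL.2.1 0 j (by omega) hj) h1)
    (hE.trans (.of_eq c' fun j hj => (h1' j hj).symm)))
    (fun i hi => (h2 i hi).trans (h2' i hi).symm)
  refine ⟨fun i hi => ?_, ?_⟩
  · rw [← h3 i hi, ← h3' i hi]
    exact (key i hi).endpoints.1
  · exact ElemEquiv.trans (.of_eq d fun j hj => (h4 j hj).symm) (ElemEquiv.trans (key t le_rfl)
      (.of_eq (fun j hj => hL'.2.1 t j le_rfl hj) h4'))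

theorem elemEquiv_left {S₁ T₁ S₁' : ℕ → YoungDiagram} (h : ShufflesTo s t S T T' S')
    (h' : ShufflesTo s t S₁ T₁ T' S₁') (hE : ElemEquiv s S' S₁') :
    ∀ i, i ≤ t → T i = T₁ i := by
  have c := h'.isChain_right
  obtain ⟨L, hL, h1, h2, h3, h4⟩ := h
  obtain ⟨L', hL', h1', h2', h3', h4'⟩ := h'
  have key := hL.elemEquiv_left hL' (ElemEquiv.trans (.of_eq (fun j hj => hL.2.1 t j le_rfl hj) h4)
    (hE.trans (.of_eq c fun j hj => (h4' j hj).symm)))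
    (fun i hi => (h3 i hi).trans (h3' i hi).symm)
  intro i hi
  rw [← h2 i hi, ← h2' i hi]
  exact (key i hi).endpoints.2

end ShufflesTo

theorem ElemEquiv.dualEquiv {m : ℕ} {S S' : ℕ → YoungDiagram} (h : ElemEquiv m S S') :
    DualEquiv m S S' :=
  ⟨h.endpoints.1, h.endpoints.2, fun _ _ _ _ _ _ h1 h2 => (h1.elemEquiv_right h2 h).1,
    fun _ _ _ _ _ _ h1 h2 => h1.symm.elemEquiv_left h2.symm h⟩

/-- Every cell of a diagram is dominated by a removable cell. -/
theorem YoungDiagram.exists_corner {ν : YoungDiagram} {a b : ℕ} (h : (a, b) ∈ ν) :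
    ∃ i j : ℕ, a ≤ i ∧ b ≤ j ∧ (i, j) ∈ ν ∧ ∃ ν', AddContent ν' ((j : ℤ) - i) ν := by
  obtain ⟨⟨i, j⟩, hij, hmax⟩ := Finset.exists_max_image
    (ν.cells.filter fun p => a ≤ p.1 ∧ b ≤ p.2) (fun p => p.1 + p.2) ⟨(a, b), by simpa using h⟩
  simp only [Finset.mem_filter, YoungDiagram.mem_cells, Prod.forall] at hij hmax
  have hlow : IsLowerSet ((ν.cells.erase (i, j) : Finset (ℕ × ℕ)) : Set (ℕ × ℕ)) := by
    rintro ⟨x, y⟩ ⟨x', y'⟩ hle hx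
    obtain ⟨hle1, hle2⟩ : x' ≤ x ∧ y' ≤ y := hle
    simp only [Finset.mem_coe, Finset.mem_erase, YoungDiagram.mem_cells, ne_eq,
      Prod.mk.injEq] at hx ⊢
    refine ⟨?_, YoungDiagram.mem_of_le hx.2 hle1 hle2⟩
    rintro ⟨rfl, rfl⟩
    have := hmax x y ⟨hx.2, by omega, by omega⟩
    omega
  have hmem : ∀ x y, (x, y) ∈ (⟨ν.cells.erase (i, j), hlow⟩ : YoungDiagram) ↔
      ¬ (x = i ∧ y = j) ∧ (x, y) ∈ ν := by
    intro x y
    rw [← YoungDiagram.mem_cells]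
    simp only [Finset.mem_erase, ne_eq, Prod.mk.injEq, YoungDiagram.mem_cells]
  refine ⟨i, j, hij.2.1, hij.2.2, hij.1, ⟨_, hlow⟩, i, j, rfl, ?_, fun x y => ?_⟩
  · rw [hmem]
    tauto
  · rw [hmem]
    by_cases hxy : x = i ∧ y = j
    · obtain ⟨rfl, rfl⟩ := hxy
      simpa using hij.1
    · tauto

/-- Between two removable cells of a diagram there is a third one once both are removed. -/
theorem AddContent.exists_between {α α' β : YoungDiagram} {c c' : ℤ} (h : AddContent α c β)
    (h' : AddContent α' c' β) (hlt : c < c') :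
    ∃ ν d μ, AddContent ν d μ ∧ AddContent μ c' α ∧ AddContent μ c α' ∧ c < d ∧ d < c' := by
  obtain ⟨i, j, hc, hn, hb⟩ := h
  obtain ⟨i', j', hc', hn', hb'⟩ := h'
  have key : ∀ x y, ((x, y) ∈ α ∨ (x = i ∧ y = j)) ↔ ((x, y) ∈ α' ∨ (x = i' ∧ y = j')) :=
    fun x y => (hb x y).symm.trans (hb' x y)
  have hα : (i', j') ∈ α := ((key i' j').2 (by simp)).resolve_right (by omega)
  have hα' : (i, j) ∈ α' := ((key i j).1 (by simp)).resolve_right (by omega)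
  have hmem : ∀ x y, (x, y) ∈ α ⊓ α' ↔ (x, y) ∈ α ∧ (x, y) ∈ α' := fun x y =>
    YoungDiagram.mem_inf
  have hi : i' < i := by
    by_contra hcon
    exact hn (YoungDiagram.mem_of_le hα (by omega) (by omega))
  have hj : j < j' := by
    by_contra hcon
    exact hn' (YoungDiagram.mem_of_le hα' (by omega) (by omega))
  have hm : (i - 1, j) ∈ α ⊓ α' := by
    have h1 : (i - 1, j) ∈ α' := YoungDiagram.mem_of_le hα' (by omega) le_rfl
    have h2 := ((key (i - 1) j).2 (Or.inl h1)).resolve_right (by omega)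
    exact (hmem _ _).2 ⟨h2, h1⟩
  obtain ⟨r, k, hr, hk, hrk, ν, hν⟩ := YoungDiagram.exists_corner hm
  rw [hmem] at hrk
  have hri : r < i := by
    by_contra hcon
    exact hn (YoungDiagram.mem_of_le hrk.1 (by omega) hk)
  have hkj : k < j' := by
    by_contra hcon
    exact hn' (YoungDiagram.mem_of_le hrk.2 (by omega) (by omega))
  refine ⟨ν, _, α ⊓ α', hν, ⟨i', j', hc', fun h => hn' ((hmem _ _).1 h).2, fun x y => ?_⟩,
    ⟨i, j, hc, fun h => hn ((hmem _ _).1 h).1, fun x y => ?_⟩, by omega, by omega⟩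
  · rw [hmem]
    have := key x y
    by_cases hxy : x = i' ∧ y = j'
    · obtain ⟨rfl, rfl⟩ := hxy
      tauto
    · tauto
  · rw [hmem]
    have := key x y
    by_cases hxy : x = i ∧ y = j
    · obtain ⟨rfl, rfl⟩ := hxy
      tauto
    · tauto

theorem IsChain'.card_eq {n : ℕ} {S : ℕ → YoungDiagram} (h : IsChain' n S) (h0 : S 0 = ⊥) :
    ∀ j, j ≤ n → (S j).cells.card = j := by
  intro j
  induction j with
  | zero => simp [h0]
  | succ j ih =>
    intro hj
    rw [(h j hj).2, ih (by omega)]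

theorem exists_straight_chain {n : ℕ} {ν : YoungDiagram} (hν : ν.cells.card = n) :
    ∃ S, IsChain' n S ∧ S 0 = ⊥ ∧ S n = ν := by
  induction n generalizing ν with
  | zero =>
    have : ν = ⊥ := by
      ext x
      simp [Finset.card_eq_zero.1 hν]
    exact ⟨fun _ => ⊥, fun i hi => by omega, rfl, this.symm⟩
  | succ n ih =>
    obtain ⟨⟨a, b⟩, hab⟩ := Finset.card_pos.1 (by omega : 0 < ν.cells.card)
    obtain ⟨i, j, -, -, -, ν', h⟩ := YoungDiagram.exists_corner hab
    have := h.oneBox.2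
    obtain ⟨S, hS, h0, rfl⟩ := ih (ν := ν') (by omega)
    exact ⟨_, hS.snoc h.oneBox, by simpa using h0, by simp⟩

theorem ElemStep.snoc {m : ℕ} {S S' : ℕ → YoungDiagram} {β : YoungDiagram} (h : ElemStep m S S')
    (hβ : OneBox (S m) β) :
    ElemStep (m + 1) (fun j => if j ≤ m then S j else β) (fun j => if j ≤ m then S' j else β) := by
  have e := h.endpoints.2
  obtain ⟨c, c', h⟩ := h
  refine ⟨c.snoc hβ, c'.snoc (e ▸ hβ), ?_⟩
  rcases h with h | ⟨k, hk, h, hK⟩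
  · refine Or.inl fun j _ => ?_
    by_cases hj : j ≤ m
    · simpa [hj] using h j hj
    · simp [hj]
  · refine Or.inr ⟨k, by omega, fun j _ h1 h2 => ?_, ?_⟩
    · by_cases hj : j ≤ m
      · simpa [hj] using h j hj h1 h2
      · simp [hj]
    · simpa [KnuthAt, show k ≤ m by omega, show k + 1 ≤ m by omega, show k + 2 ≤ m by omega, hk]
        using hK

theorem ElemEquiv.snoc {m : ℕ} {S S' : ℕ → YoungDiagram} {β : YoungDiagram}
    (h : ElemEquiv m S S') (hβ : OneBox (S m) β) :
    ElemEquiv (m + 1) (fun j => if j ≤ m then S j else β)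
      (fun j => if j ≤ m then S' j else β) := by
  induction h with
  | refl => exact .refl
  | tail h0 h1 ih =>
    refine .tail ih (h1.snoc ?_)
    rwa [← ElemEquiv.endpoints h0 |>.2]

/-- Chains agreeing one step before the end are equivalent if their truncations are. -/
theorem ElemEquiv.of_truncate {m : ℕ} {S S' : ℕ → YoungDiagram} (h : ElemEquiv m S S')
    (hS : IsChain' (m + 1) S) (hS' : IsChain' (m + 1) S') (he : S (m + 1) = S' (m + 1)) :
    ElemEquiv (m + 1) S S' := by
  have h1 := h.snoc (hS m (by omega))
  have aux : ∀ j, j ≤ m + 1 → S j = if j ≤ m then S j else S (m + 1) := by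
    intro j hj
    rcases Nat.le_succ_iff.1 hj with hj | rfl
    · simp [hj]
    · simp
  have aux' : ∀ j, j ≤ m + 1 → S' j = if j ≤ m then S' j else S (m + 1) := by
    intro j hj
    rcases Nat.le_succ_iff.1 hj with hj | rfl
    · simp [hj]
    · simp [he]
  exact ElemEquiv.trans (.of_eq hS aux)
    (ElemEquiv.trans h1 (.of_eq (hS'.congr aux') fun j hj => (aux' j hj).symm))

/-- Two chains of the same straight shape are related by elementary dual equivalences. -/
theorem ElemEquiv.of_straight {n : ℕ} {S S' : ℕ → YoungDiagram} (hS : IsChain' n S)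
    (hS' : IsChain' n S') (h0 : S 0 = ⊥) (h0' : S' 0 = ⊥) (he : S n = S' n) :
    ElemEquiv n S S' := by
  induction n generalizing S S' with
  | zero =>
    refine .of_eq hS fun j hj => ?_
    obtain rfl : j = 0 := by omega
    exact he
  | succ n ih =>
    by_cases hn : S n = S' n
    · exact (ih (hS.mono (by omega)) (hS'.mono (by omega)) h0 h0' hn).of_truncate hS hS' he
    · obtain ⟨c, hc⟩ := (hS n (by omega)).exists_addContent
      obtain ⟨c', hc'⟩ := (hS' n (by omega)).exists_addContent
      have hcard := hS.card_eq h0 n (by omega)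
      rw [← he] at hc'
      obtain ⟨ν, d, μ, hν, hμ, hμ', hd⟩ : ∃ ν d μ, AddContent ν d μ ∧ AddContent μ c' (S n) ∧
          AddContent μ c (S' n) ∧ (c < d ∧ d < c' ∨ c' < d ∧ d < c) := by
        rcases lt_trichotomy c c' with h | rfl | h
        · obtain ⟨ν, d, μ, h1, h2, h3, h4⟩ := hc.exists_between hc' h
          exact ⟨ν, d, μ, h1, h2, h3, Or.inl h4⟩
        · exact absurd (hc.source_unique hc') hn
        · obtain ⟨ν, d, μ, h1, h2, h3, h4⟩ := hc'.exists_between hc h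
          exact ⟨ν, d, μ, h1, h3, h2, Or.inr h4⟩
      have e1 := hμ.oneBox.2
      have e2 := hν.oneBox.2
      obtain ⟨e, he'⟩ : ∃ e, ν.cells.card = e := ⟨_, rfl⟩
      obtain rfl : n = e + 2 := by omega
      obtain ⟨P, hP, hP0, rfl⟩ := exists_straight_chain he'
      have hV := hP.snoc hν.oneBox
      have hU := hV.snoc (β := S (e + 2)) (by simpa using hμ.oneBox)
      have hU' := hV.snoc (β := S' (e + 2)) (by simpa using hμ'.oneBox)
      have hW := hU.snoc (β := S (e + 3)) (by simpa using hc.oneBox)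
      have hW' := hU'.snoc (β := S (e + 3)) (by simpa using hc'.oneBox)
      have i1 := ih (hS.mono (by omega)) (hW.mono (by omega)) h0 (by simpa using hP0) (by simp)
      have i2 := ih (hW'.mono (by omega)) (hS'.mono (by omega)) (by simpa using hP0) h0' (by simp)
      refine .trans (i1.of_truncate hS hW (by simp)) (.trans (.single ⟨hW, hW', Or.inr
        ⟨e, le_rfl, fun j hj h1 h2 => ?_, d, c', c, d, c, c', ?_⟩⟩)
        (i2.of_truncate hW' hS' (by simpa using he)))
      · rcases Nat.lt_or_ge e j with hej | hej
        · obtain rfl : j = e + 3 := by omega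
          simp
        · simp [hej, show j ≤ e + 1 by omega, show j ≤ e + 2 by omega]
      · have hle : e ≤ e + 1 + 1 := by omega
        refine ⟨by simpa [hle] using hν, by simpa using hμ, by simpa using hc,
          by simpa [hle] using hν, by simpa using hμ', by simpa using hc',
          Or.inl ⟨rfl, rfl, rfl, ?_⟩⟩
        omega

/-- The rectification of a chain is unique. -/
theorem Rectifies.unique {m : ℕ} {T R R' : ℕ → YoungDiagram} (h : Rectifies m T R)
    (h' : Rectifies m T R') : ∀ i, i ≤ m → R i = R' i := by
  obtain ⟨-, s, A, A', hA, h⟩ := h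
  obtain ⟨-, s', B, B', hB, h'⟩ := h'
  have e1 := h.isChain_left.card_eq hA s le_rfl
  have e2 := h'.isChain_left.card_eq hB s' le_rfl
  rw [h.left_last] at e1
  rw [h'.left_last, e1] at e2
  subst e2
  exact (h.elemEquiv_right h' (.of_straight h.isChain_left h'.isChain_left hA hB
    (h.left_last.trans h'.left_last.symm))).1

/-- Let `D` be a dual equivalence class (represented by a tableau `TD`) and `S` a slide
equivalence class (represented by a tableau `TS`), such that the rectification shape of
`D` equals the shape of the rectification tableau of `S`.  Then there is a unique
tableau lying in both `D` and `S`. -/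
theorem unique_tableau_in_dual_and_slide_class
    (m : ℕ) (TD TS : ℕ → YoungDiagram)
    (hTD : IsChain' m TD) (hTS : IsChain' m TS)
    (hshape : ∃ RD RS, Rectifies m TD RD ∧ Rectifies m TS RS ∧ RD m = RS m) :
    ∃ T : ℕ → YoungDiagram,
      (IsChain' m T ∧ DualEquiv m T TD ∧ SlideEquiv m T TS) ∧
      (∀ T' : ℕ → YoungDiagram,
        IsChain' m T' → DualEquiv m T' TD → SlideEquiv m T' TS →
        ∀ i, i ≤ m → T' i = T i) := by
  obtain ⟨RD, RS, hD, hS, hR⟩ := hshape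
  obtain ⟨hRS0, q, B, B', hB0, hBS⟩ := id hS
  obtain ⟨hRD0, s, A, A', hA0, hA⟩ := id hD
  have hRSc : IsChain' m RS := hBS.symm.isChain_left
  have hRDc : IsChain' m RD := hA.symm.isChain_left
  obtain ⟨A₁, T, hT⟩ := exists_shufflesTo hRSc hA.isChain_right
    (hR.symm.trans hA.bottom_last)
  have hE := ElemEquiv.of_straight hRSc hRDc hRS0 hRD0 hR.symm
  have hTE := hT.elemEquiv_right hA.symm hE
  refine ⟨T, ⟨hT.isChain_right, hTE.2.dualEquiv, RS,
    ⟨hRS0, s, A₁, A', hT.left_first.symm.trans hRS0, hT.symm⟩, hS⟩, ?_⟩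
  rintro T' hT'c hT'D ⟨R, hR1, hR2⟩
  obtain ⟨R₁, A₂, hT'⟩ := exists_shufflesTo hA.isChain_left hT'c
    (hA.left_last.trans hT'D.1.symm)
  have hA₂ := hT'D.2.2.2 _ _ _ _ _ _ hT' hA
  have hR₁ : Rectifies m T' R₁ := ⟨hT'.left_first.symm.trans hA0, s, A, A₂, hA0, hT'⟩
  have hRR : ∀ i, i ≤ m → R₁ i = RS i := fun i hi =>
    (hR₁.unique hR1 i hi).trans (hR2.unique hS i hi)
  exact ShufflesTo.right_unique
    (hT'.symm.congr hRR hA₂ (fun _ _ => rfl) (fun _ _ => rfl)) hT
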